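/- arXiv:0812.3529 — 3 statements merged into one kernel-verified Lean document; each statement's English description precedes it below -/
import Mathlib

section
/- Fix ε > 0 and n ≥ 1. Let L : ℝ^n × ℝ^n × ℝ → ℝ be continuously differentiable and x : ℝ → ℝ^n continuous. Set G(t) = ∂₁L(x(t), d⁺_ε x(t), t) and F(t) = ∂₂L(x(t), d⁺_ε x(t), t). Then the following are equivalent: (i) for every h ∈ C_c^∞(ℝ, ℝ^n), ∫_ℝ [G(t)·h(t) + F(t)·d⁺_ε h(t)] dt = 0; (ii) for every t ∈ ℝ, G(t) = d⁻_ε F(t). (This is the anti-causal Euler–Lagrange equation obtained when trajectory and variations evolve in the same temporal direction past → future.) -/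
open MeasureTheory
open scoped RealInnerProductSpace

noncomputable section

/-- Backward (left) finite difference: `d⁺_ε f t = (f t − f (t − ε)) / ε`. -/
def backwardDiff {n : ℕ} (ε : ℝ) (f : ℝ → EuclideanSpace ℝ (Fin n)) (t : ℝ) :
    EuclideanSpace ℝ (Fin n) :=
  ε⁻¹ • (f t - f (t - ε))

/-- Forward (right) finite difference: `d⁻_ε f t = (f (t + ε) − f t) / ε`. -/
def forwardDiff {n : ℕ} (ε : ℝ) (f : ℝ → EuclideanSpace ℝ (Fin n)) (t : ℝ) :
    EuclideanSpace ℝ (Fin n) :=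
  ε⁻¹ • (f (t + ε) - f t)

/-- `∂₁L(x,v,t)`: gradient of `L` with respect to its first `ℝ^n` argument. -/
def grad1 {n : ℕ} (L : EuclideanSpace ℝ (Fin n) × EuclideanSpace ℝ (Fin n) × ℝ → ℝ)
    (x v : EuclideanSpace ℝ (Fin n)) (t : ℝ) : EuclideanSpace ℝ (Fin n) :=
  gradient (fun y => L (y, v, t)) x

/-- `∂₂L(x,v,t)`: gradient of `L` with respect to its second `ℝ^n` argument. -/
def grad2 {n : ℕ} (L : EuclideanSpace ℝ (Fin n) × EuclideanSpace ℝ (Fin n) × ℝ → ℝ)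
    (x v : EuclideanSpace ℝ (Fin n)) (t : ℝ) : EuclideanSpace ℝ (Fin n) :=
  gradient (fun w => L (x, w, t)) v

lemma aux_cont1 {n : ℕ} (L : EuclideanSpace ℝ (Fin n) × EuclideanSpace ℝ (Fin n) × ℝ → ℝ)
    (hL : ContDiff ℝ 1 L) (x v : ℝ → EuclideanSpace ℝ (Fin n)) (hx : Continuous x)
    (hv : Continuous v) : Continuous (fun t => grad1 L (x t) (v t) t) := by
  have h1 : ∀ t, fderiv ℝ (fun y => L (y, v t, t)) (x t) =
      (fderiv ℝ L (x t, v t, t)).comp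
        (ContinuousLinearMap.inl ℝ (EuclideanSpace ℝ (Fin n)) (EuclideanSpace ℝ (Fin n) × ℝ)) := by
    intro t
    have hd : HasFDerivAt L (fderiv ℝ L (x t, v t, t)) (x t, v t, t) :=
      (hL.differentiable one_ne_zero _).hasFDerivAt
    exact (hd.comp (x t) (hasFDerivAt_prodMk_left (x t) (v t, t))).fderiv
  have hc := hL.continuous_fderiv one_ne_zero
  unfold grad1 gradient
  simp only [h1]
  fun_prop

lemma aux_cont2 {n : ℕ} (L : EuclideanSpace ℝ (Fin n) × EuclideanSpace ℝ (Fin n) × ℝ → ℝ)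
    (hL : ContDiff ℝ 1 L) (x v : ℝ → EuclideanSpace ℝ (Fin n)) (hx : Continuous x)
    (hv : Continuous v) : Continuous (fun t => grad2 L (x t) (v t) t) := by
  have h1 : ∀ t, fderiv ℝ (fun w => L (x t, w, t)) (v t) =
      (fderiv ℝ L (x t, v t, t)).comp
        ((ContinuousLinearMap.inr ℝ (EuclideanSpace ℝ (Fin n)) (EuclideanSpace ℝ (Fin n) × ℝ)).comp
        (ContinuousLinearMap.inl ℝ (EuclideanSpace ℝ (Fin n)) ℝ)) := by
    intro t
    have hd : HasFDerivAt L (fderiv ℝ L (x t, v t, t)) (x t, v t, t) :=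
      (hL.differentiable one_ne_zero _).hasFDerivAt
    have h2 : HasFDerivAt (fun w : EuclideanSpace ℝ (Fin n) => (x t, w, t))
        ((ContinuousLinearMap.inr ℝ (EuclideanSpace ℝ (Fin n)) (EuclideanSpace ℝ (Fin n) × ℝ)).comp
        (ContinuousLinearMap.inl ℝ (EuclideanSpace ℝ (Fin n)) ℝ)) (v t) :=
      HasFDerivAt.comp (g := fun p : EuclideanSpace ℝ (Fin n) × ℝ => (x t, p)) (v t)
        (hasFDerivAt_prodMk_right (x t) (v t, t)) (hasFDerivAt_prodMk_left (v t) t)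
    exact (hd.comp (v t) h2).fderiv
  have hc := hL.continuous_fderiv one_ne_zero
  unfold grad2 gradient
  simp only [h1]
  fun_prop

lemma aux_parts {n : ℕ} (ε : ℝ) (G F h : ℝ → EuclideanSpace ℝ (Fin n))
    (hG : Continuous G) (hF : Continuous F) (hh : Continuous h) (hs : HasCompactSupport h) :
    (∫ t : ℝ, (⟪G t, h t⟫ + ⟪F t, backwardDiff ε h t⟫)) =
      ∫ t : ℝ, ⟪G t - forwardDiff ε F t, h t⟫ := by
  have key : ∀ K : ℝ → EuclideanSpace ℝ (Fin n), Continuous K →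
      Integrable (fun t => ⟪K t, h t⟫) := by
    intro K hK
    refine (hK.inner hh).integrable_of_hasCompactSupport ?_
    refine hs.mono ?_
    intro t ht
    contrapose! ht
    simp only [Function.notMem_support] at ht ⊢
    simp [ht]
  have hF1 : Continuous (fun t => F (t + ε)) := by fun_prop
  have i1 := key G hG
  have i2 := key F hF
  have i3 := key _ hF1
  have i4 : Integrable (fun t => ⟪F t, h (t - ε)⟫) := by
    simpa using i3.comp_sub_right ε
  have e : ∫ t, ⟪F t, h (t - ε)⟫ = ∫ t, ⟪F (t + ε), h t⟫ := by
    simpa using integral_sub_right_eq_self (fun t => ⟪F (t + ε), h t⟫) ε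
  have l : ∀ t, ⟪G t, h t⟫ + ⟪F t, backwardDiff ε h t⟫ =
      ⟪G t, h t⟫ + ε⁻¹ * (⟪F t, h t⟫ - ⟪F t, h (t - ε)⟫) := by
    intro t; simp [backwardDiff, inner_smul_right, inner_sub_right]
  have r : ∀ t, ⟪G t - forwardDiff ε F t, h t⟫ =
      ⟪G t, h t⟫ - ε⁻¹ * (⟪F (t + ε), h t⟫ - ⟪F t, h t⟫) := by
    intro t; simp [forwardDiff, inner_smul_left, inner_sub_left]
  simp only [l, r]
  have j1 : Integrable (fun t => ε⁻¹ * (⟪F t, h t⟫ - ⟪F t, h (t - ε)⟫)) :=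
    (i2.sub i4).const_mul _
  have j2 : Integrable (fun t => ε⁻¹ * (⟪F (t + ε), h t⟫ - ⟪F t, h t⟫)) :=
    (i3.sub i2).const_mul _
  rw [integral_add i1 j1, integral_sub i1 j2,
    integral_const_mul, integral_const_mul, integral_sub i2 i4, integral_sub i3 i2, e]
  ring

/-- anti-causal Euler–Lagrange equation, obtained when the trajectory
and the variations evolve in the same temporal direction past → future.
With `G = ∂₁L(x, d⁺_ε x, ·)` and `F = ∂₂L(x, d⁺_ε x, ·)`, the trajectory is an
extremal with respect to variations entering via `d⁺_ε h` if and only if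
`G = d⁻_ε F` everywhere. -/
theorem anticausal_euler_lagrange_forward
    (ε : ℝ) (hε : 0 < ε) (n : ℕ) (hn : 1 ≤ n)
    (L : EuclideanSpace ℝ (Fin n) × EuclideanSpace ℝ (Fin n) × ℝ → ℝ)
    (hL : ContDiff ℝ 1 L)
    (x : ℝ → EuclideanSpace ℝ (Fin n)) (hx : Continuous x)
    (G : ℝ → EuclideanSpace ℝ (Fin n))
    (hG : G = fun t => grad1 L (x t) (backwardDiff ε x t) t)
    (F : ℝ → EuclideanSpace ℝ (Fin n))
    (hF : F = fun t => grad2 L (x t) (backwardDiff ε x t) t) :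
    (∀ h : ℝ → EuclideanSpace ℝ (Fin n),
        ContDiff ℝ (⊤ : ℕ∞) h → HasCompactSupport h →
        (∫ t : ℝ, (⟪G t, h t⟫ + ⟪F t, backwardDiff ε h t⟫)) = 0) ↔
    (∀ t : ℝ, G t = forwardDiff ε F t) := by
  have hb : Continuous (backwardDiff ε x) := by unfold backwardDiff; fun_prop
  have cG : Continuous G := hG ▸ aux_cont1 L hL x _ hx hb
  have cF : Continuous F := hF ▸ aux_cont2 L hL x _ hx hb
  clear hG hF
  have cK : Continuous (fun t => G t - forwardDiff ε F t) := by unfold forwardDiff; fun_prop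
  constructor
  · intro H t
    rw [← sub_eq_zero]
    refine ext_inner_right ℝ fun v => ?_
    rw [inner_zero_left]
    have cKv : Continuous (fun t => ⟪G t - forwardDiff ε F t, v⟫) := cK.inner continuous_const
    have hae := ae_eq_zero_of_integral_contDiff_smul_eq_zero (μ := volume)
      cKv.locallyIntegrable (fun g hg hgs => by
        have := H (fun t => g t • v) (hg.smul contDiff_const) hgs.smul_right
        rw [aux_parts ε G F (fun t => g t • v) cG cF (hg.continuous.smul continuous_const) hgs.smul_right] at this
        simpa [inner_smul_right] using this)
    exact congrFun (Continuous.ae_eq_iff_eq volume cKv continuous_const |>.1 hae) t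
  · intro H h hh hs
    rw [aux_parts ε G F h cG cF hh.continuous hs]
    simp [H]

end
end

section
/- Let n ≥ 1, let F, G, P⁺, P⁻ : ℝ → ℝ^n be functions with G, P⁺, P⁻ continuous, and let D⁺, D⁻ : C_c^∞(ℝ, ℝ^n) → (ℝ → ℝ^n) be maps such that for every h ∈ C_c^∞(ℝ, ℝ^n) the functions t ↦ F(t)·(D⁺h)(t) and t ↦ F(t)·(D⁻h)(t) are integrable on ℝ and the integration-by-parts identities ∫_ℝ F(t)·(D⁻h)(t) dt = − ∫_ℝ P⁺(t)·h(t) dt and ∫_ℝ F(t)·(D⁺h)(t) dt = − ∫_ℝ P⁻(t)·h(t) dt hold. Then the following are equivalent: (i) for all h₊, h₋ ∈ C_c^∞(ℝ, ℝ^n), ∫_ℝ [G(t)·(h₊(t)+h₋(t)) + F(t)·((D⁺h₊)(t)+(D⁻h₋)(t))] dt = 0; (ii) for every t ∈ ℝ, G(t) = P⁺(t) and G(t) = P⁻(t). (Abstract form of the two-directional variational theorem: an extremal over all variation pairs must satisfy both generalized Euler–Lagrange equations, with P⁺ playing the role of D⁺F and P⁻ of D⁻F.) -/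
open MeasureTheory
open scoped RealInnerProductSpace

lemma aux_int {n : ℕ} (f h : ℝ → EuclideanSpace ℝ (Fin n)) (hf : Continuous f)
    (hh : ContDiff ℝ (⊤ : ℕ∞) h) (hc : HasCompactSupport h) :
    Integrable (fun t : ℝ => ⟪f t, h t⟫) := by
  apply Continuous.integrable_of_hasCompactSupport
  · exact hf.inner hh.continuous
  · refine hc.mono fun t ht => ?_
    intro h0
    apply ht
    simp [h0]

lemma aux_fund {n : ℕ} (f : ℝ → EuclideanSpace ℝ (Fin n)) (hf : Continuous f)
    (H : ∀ h : ℝ → EuclideanSpace ℝ (Fin n), ContDiff ℝ (⊤ : ℕ∞) h → HasCompactSupport h →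
      (∫ t : ℝ, ⟪f t, h t⟫) = 0) (t : ℝ) : f t = 0 := by
  have key : ∀ c : EuclideanSpace ℝ (Fin n), (fun s => ⟪f s, c⟫) = fun _ => (0 : ℝ) := by
    intro c
    have hcont : Continuous (fun s => ⟪f s, c⟫) := hf.inner continuous_const
    rw [← hcont.ae_eq_iff_eq volume continuous_const]
    refine ae_eq_zero_of_integral_contDiff_smul_eq_zero hcont.locallyIntegrable ?_
    intro g hg hgc
    have := H (fun s => g s • c) (hg.smul contDiff_const) hgc.smul_right
    simpa [inner_smul_right] using this
  have := congrFun (key (f t)) t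
  simpa using this

/-- abstract form of the two-directional variational theorem.
Given `F, G, P⁺, P⁻ : ℝ → ℝ^n` with `G`, `P⁺`, `P⁻` continuous and operators
`D⁺`, `D⁻` on variations satisfying the integration-by-parts identities
`∫ F · D⁻ h = − ∫ P⁺ · h` and `∫ F · D⁺ h = − ∫ P⁻ · h` (with the corresponding
integrability), extremality over all variation pairs `(h₊, h₋)` is equivalent to
both generalized Euler–Lagrange equations `G = P⁺` and `G = P⁻` on `ℝ`. -/
theorem abstract_two_directional_variational
    (n : ℕ) (hn : 1 ≤ n)
    (F G Pp Pm : ℝ → EuclideanSpace ℝ (Fin n))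
    (hG : Continuous G) (hPp : Continuous Pp) (hPm : Continuous Pm)
    (Dp Dm : (ℝ → EuclideanSpace ℝ (Fin n)) → (ℝ → EuclideanSpace ℝ (Fin n)))
    (hIntp : ∀ h : ℝ → EuclideanSpace ℝ (Fin n),
        ContDiff ℝ (⊤ : ℕ∞) h → HasCompactSupport h →
        Integrable (fun t : ℝ => ⟪F t, Dp h t⟫))
    (hIntm : ∀ h : ℝ → EuclideanSpace ℝ (Fin n),
        ContDiff ℝ (⊤ : ℕ∞) h → HasCompactSupport h →
        Integrable (fun t : ℝ => ⟪F t, Dm h t⟫))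
    (hIBPp : ∀ h : ℝ → EuclideanSpace ℝ (Fin n),
        ContDiff ℝ (⊤ : ℕ∞) h → HasCompactSupport h →
        (∫ t : ℝ, ⟪F t, Dm h t⟫) = - ∫ t : ℝ, ⟪Pp t, h t⟫)
    (hIBPm : ∀ h : ℝ → EuclideanSpace ℝ (Fin n),
        ContDiff ℝ (⊤ : ℕ∞) h → HasCompactSupport h →
        (∫ t : ℝ, ⟪F t, Dp h t⟫) = - ∫ t : ℝ, ⟪Pm t, h t⟫) :
    (∀ hp hm : ℝ → EuclideanSpace ℝ (Fin n),
        ContDiff ℝ (⊤ : ℕ∞) hp → HasCompactSupport hp →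
        ContDiff ℝ (⊤ : ℕ∞) hm → HasCompactSupport hm →
        (∫ t : ℝ, (⟪G t, hp t + hm t⟫ + ⟪F t, Dp hp t + Dm hm t⟫)) = 0) ↔
    (∀ t : ℝ, G t = Pp t ∧ G t = Pm t) := by
  have hz : ContDiff ℝ (⊤ : ℕ∞) (fun _ : ℝ => (0 : EuclideanSpace ℝ (Fin n))) := contDiff_const
  have hzc : HasCompactSupport (fun _ : ℝ => (0 : EuclideanSpace ℝ (Fin n))) :=
    HasCompactSupport.zero
  have key : ∀ hp hm : ℝ → EuclideanSpace ℝ (Fin n),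
      ContDiff ℝ (⊤ : ℕ∞) hp → HasCompactSupport hp →
      ContDiff ℝ (⊤ : ℕ∞) hm → HasCompactSupport hm →
      (∫ t : ℝ, (⟪G t, hp t + hm t⟫ + ⟪F t, Dp hp t + Dm hm t⟫)) =
      (∫ t : ℝ, ⟪G t - Pm t, hp t⟫) + ∫ t : ℝ, ⟪G t - Pp t, hm t⟫ := by
    intro hp hm h1 h2 h3 h4
    have a1 := aux_int G hp hG h1 h2
    have a2 := aux_int G hm hG h3 h4
    have a3 := hIntp hp h1 h2
    have a4 := hIntm hm h3 h4
    have a12 : Integrable (fun t : ℝ => ⟪G t, hp t⟫ + ⟪G t, hm t⟫) := a1.add a2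
    have a34 : Integrable (fun t : ℝ => ⟪F t, Dp hp t⟫ + ⟪F t, Dm hm t⟫) := a3.add a4
    simp only [inner_add_right, inner_sub_left]
    rw [integral_add a12 a34, integral_add a1 a2, integral_add a3 a4,
      integral_sub a1 (aux_int Pm hp hPm h1 h2), integral_sub a2 (aux_int Pp hm hPp h3 h4),
      hIBPp hm h3 h4, hIBPm hp h1 h2]
    ring
  constructor
  · intro H t
    constructor
    · refine sub_eq_zero.1 (aux_fund (fun t => G t - Pp t) (hG.sub hPp) ?_ t)
      intro h h1 h2
      have e := H _ h hz hzc h1 h2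
      rw [key _ h hz hzc h1 h2] at e
      simpa using e
    · refine sub_eq_zero.1 (aux_fund (fun t => G t - Pm t) (hG.sub hPm) ?_ t)
      intro h h1 h2
      have e := H h _ h1 h2 hz hzc
      rw [key h _ h1 h2 hz hzc] at e
      simpa using e
  · intro H hp hm h1 h2 h3 h4
    rw [key hp hm h1 h2 h3 h4]
    have e1 : ∀ t, G t - Pm t = 0 := fun t => sub_eq_zero.2 (H t).2
    have e2 : ∀ t, G t - Pp t = 0 := fun t => sub_eq_zero.2 (H t).1
    simp [e1, e2]
end

section
/- Let a < b be real numbers, n ≥ 1, L : ℝ^n × ℝ^n × ℝ → ℝ continuously differentiable, and x : ℝ → ℝ^n continuously differentiable. Assume the function F(t) = ∂₂L(x(t), x'(t), t) is continuously differentiable on [a,b]. Then the following are equivalent: (i) for every smooth h : ℝ → ℝ^n with compact support contained in the open interval (a,b), ∫_a^b [∂₁L(x(t), x'(t), t)·h(t) + F(t)·h'(t)] dt = 0; (ii) for every t ∈ [a,b], ∂₁L(x(t), x'(t), t) = F'(t). (This is the classical-derivative instance of the variational theorem: extremality of the action under compactly supported variations is equivalent to the classical Euler–Lagrange equation.) 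-/
open MeasureTheory
open scoped RealInnerProductSpace

noncomputable section

theorem grad1_cont {n : ℕ} (L : EuclideanSpace ℝ (Fin n) × EuclideanSpace ℝ (Fin n) × ℝ → ℝ)
    (hL : ContDiff ℝ 1 L) (x : ℝ → EuclideanSpace ℝ (Fin n)) (hx : ContDiff ℝ 1 x) :
    Continuous (fun t => grad1 L (x t) (deriv x t) t) := by
  have key : ∀ t, grad1 L (x t) (deriv x t) t =
      (InnerProductSpace.toDual ℝ (EuclideanSpace ℝ (Fin n))).symm
        ((fderiv ℝ L (x t, deriv x t, t)).comp
          (ContinuousLinearMap.inl ℝ (EuclideanSpace ℝ (Fin n))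
            (EuclideanSpace ℝ (Fin n) × ℝ))) := by
    intro t
    unfold grad1 gradient
    congr 1
    have h1 := ((hL.differentiable one_ne_zero) (x t, deriv x t, t)).hasFDerivAt
    exact (HasFDerivAt.comp (x t) h1 (hasFDerivAt_prodMk_left (x t) (deriv x t, t))).fderiv
  simp_rw [key]
  have h2 : Continuous (deriv x) := hx.continuous_deriv le_rfl
  have h3 : Continuous (fun t => fderiv ℝ L (x t, deriv x t, t)) :=
    (hL.continuous_fderiv one_ne_zero).comp
      (hx.continuous.prodMk (h2.prodMk continuous_id))
  exact (LinearIsometryEquiv.continuous _).comp (h3.clm_comp continuous_const)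

theorem ibp {n : ℕ} (a b : ℝ) (hab : a < b) (G F F' h : ℝ → EuclideanSpace ℝ (Fin n))
    (hG : Continuous G)
    (hF' : ∀ t ∈ Set.Icc a b, HasDerivWithinAt F (F' t) (Set.Icc a b) t)
    (hF'c : ContinuousOn F' (Set.Icc a b))
    (hh : ContDiff ℝ (⊤ : ℕ∞) h) (hs : tsupport h ⊆ Set.Ioo a b) :
    (∫ t in a..b, (⟪G t, h t⟫ + ⟪F t, deriv h t⟫)) = ∫ t in a..b, ⟪G t - F' t, h t⟫ := by
  have hFc : ContinuousOn F (Set.Icc a b) := fun t ht => (hF' t ht).continuousWithinAt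
  have hhc : Continuous h := hh.continuous
  have hdc : Continuous (deriv h) := hh.continuous_deriv (by simp)
  have hd : ∀ t, HasDerivAt h (deriv h t) t := fun t =>
    ((hh.differentiable (by simp)) t).hasDerivAt
  have ha : h a = 0 := image_eq_zero_of_notMem_tsupport (fun hm => lt_irrefl _ (hs hm).1)
  have hb : h b = 0 := image_eq_zero_of_notMem_tsupport (fun hm => lt_irrefl _ (hs hm).2)
  have c1 : ContinuousOn (fun t => ⟪F t, deriv h t⟫ + ⟪F' t, h t⟫) (Set.Icc a b) :=
    (hFc.inner hdc.continuousOn).add (hF'c.inner hhc.continuousOn)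
  have c2 : ContinuousOn (fun t => ⟪G t - F' t, h t⟫) (Set.Icc a b) :=
    (hG.continuousOn.sub hF'c).inner hhc.continuousOn
  have i1 := c1.intervalIntegrable_of_Icc (μ := volume) hab.le
  have i2 := c2.intervalIntegrable_of_Icc (μ := volume) hab.le
  have ftc : ∫ t in a..b, (⟪F t, deriv h t⟫ + ⟪F' t, h t⟫) = ⟪F b, h b⟫ - ⟪F a, h a⟫ := by
    apply intervalIntegral.integral_eq_sub_of_hasDerivAt_of_le hab.le
      (hFc.inner hhc.continuousOn) _ i1
    intro t ht
    exact ((hF' t ⟨ht.1.le, ht.2.le⟩).hasDerivAt (Icc_mem_nhds ht.1 ht.2)).inner ℝ (hd t)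
  rw [ha, hb, inner_zero_right, inner_zero_right, sub_zero] at ftc
  have : (fun t => ⟪G t, h t⟫ + ⟪F t, deriv h t⟫) =
      fun t => ⟪G t - F' t, h t⟫ + (⟪F t, deriv h t⟫ + ⟪F' t, h t⟫) := by
    funext t
    rw [inner_sub_left]
    ring
  rw [this, intervalIntegral.integral_add i2 i1, ftc, add_zero]

/-- classical-derivative instance of the variational theorem.
With `F(t) = ∂₂L(x t, x' t, t)` continuously differentiable on `[a,b]` (with
derivative `F'`), the action is extremal under all smooth variations compactly
supported in `(a,b)` if and only if the classical Euler–Lagrange equation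
`∂₁L(x t, x' t, t) = F' t` holds on `[a,b]`. -/
theorem classical_euler_lagrange
    (a b : ℝ) (hab : a < b) (n : ℕ) (hn : 1 ≤ n)
    (L : EuclideanSpace ℝ (Fin n) × EuclideanSpace ℝ (Fin n) × ℝ → ℝ)
    (hL : ContDiff ℝ 1 L)
    (x : ℝ → EuclideanSpace ℝ (Fin n)) (hx : ContDiff ℝ 1 x)
    (F : ℝ → EuclideanSpace ℝ (Fin n))
    (hF : F = fun t => grad2 L (x t) (deriv x t) t)
    (F' : ℝ → EuclideanSpace ℝ (Fin n))
    (hF' : ∀ t ∈ Set.Icc a b, HasDerivWithinAt F (F' t) (Set.Icc a b) t)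
    (hF'c : ContinuousOn F' (Set.Icc a b)) :
    (∀ h : ℝ → EuclideanSpace ℝ (Fin n),
        ContDiff ℝ (⊤ : ℕ∞) h → tsupport h ⊆ Set.Ioo a b →
        (∫ t in a..b, (⟪grad1 L (x t) (deriv x t) t, h t⟫ + ⟪F t, deriv h t⟫)) = 0) ↔
    (∀ t ∈ Set.Icc a b, grad1 L (x t) (deriv x t) t = F' t) := by
  have hG := grad1_cont L hL x hx
  generalize hGd : (fun t => grad1 L (x t) (deriv x t) t) = G at hG
  have hGt : ∀ t, grad1 L (x t) (deriv x t) t = G t := fun t => congrFun hGd t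
  simp_rw [hGt]
  constructor
  · intro H t ht
    rw [← sub_eq_zero]
    refine ext_inner_right ℝ (fun e => ?_)
    rw [inner_zero_left]
    have c : ContinuousOn (fun t => ⟪G t - F' t, e⟫) (Set.Icc a b) :=
      (hG.continuousOn.sub hF'c).inner continuousOn_const
    have hae : ∀ᵐ t ∂(volume : Measure ℝ), t ∈ Set.Ioo a b → ⟪G t - F' t, e⟫ = 0 := by
      apply isOpen_Ioo.ae_eq_zero_of_integral_contDiff_smul_eq_zero
      · exact (c.mono Set.Ioo_subset_Icc_self).locallyIntegrableOn measurableSet_Ioo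
      · intro g hg _ hs
        have hsub : tsupport (fun t => g t • e) ⊆ Set.Ioo a b :=
          (closure_mono (Function.support_smul_subset_left g (fun _ => e))).trans hs
        have hsm : ContDiff ℝ (⊤ : ℕ∞) (fun t => g t • e) := hg.smul contDiff_const
        have h0 := H _ hsm hsub
        rw [ibp a b hab G F F' _ hG hF' hF'c hsm hsub,
          intervalIntegral.integral_of_le hab.le] at h0
        rw [← h0, setIntegral_eq_integral_of_forall_compl_eq_zero]
        · simp only [inner_smul_right, smul_eq_mul]
        · intro t ht
          have : g t = 0 := image_eq_zero_of_notMem_tsupport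
            (fun hm => ht (Set.Ioo_subset_Ioc_self (hs hm)))
          simp [this]
    have hae2 : (fun t => ⟪G t - F' t, e⟫) =ᵐ[volume.restrict (Set.Icc a b)] fun _ => (0 : ℝ) := by
      rw [← restrict_Ioo_eq_restrict_Icc]
      exact (ae_restrict_iff' measurableSet_Ioo).2 hae
    exact Measure.eqOn_Icc_of_ae_eq volume hab.ne hae2 c continuousOn_const ht
  · intro H h hh hs
    rw [ibp a b hab G F F' h hG hF' hF'c hh hs]
    apply intervalIntegral.integral_zero_ae
    refine Filter.Eventually.of_forall (fun t ht => ?_)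
    rw [Set.uIoc_of_le hab.le] at ht
    simp [H t (Set.Ioc_subset_Icc_self ht)]

end
end
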